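/- arXiv:2602.05647 — 5 statements merged into one kernel-verified Lean document; each statement's English description precedes it below -/
import Mathlib

section
/- Let σ₁,…,σₙ and τ₁,…,τ_p be positive integers, with anisotropic dilations δ_λ on ℝⁿ, E_λ on ℝᵖ, and D_λ(x,ξ) = (δ_λ(x), E_λ(ξ)) on ℝᴺ = ℝⁿ×ℝᵖ. For j = 1,…,m let ν_j be a positive integer, let X_j be the smooth vector field on ℝⁿ with polynomial coefficients a_{j,1},…,a_{j,n} satisfying a_{j,i}(δ_λ(x)) = λ^{σ_i−ν_j} a_{j,i}(x) for all λ>0 and x, and let X̃_j = X_j + R_j be the vector field on ℝᴺ, where (R_j U)(x,ξ) = Σ_{l=1}^p r_{j,l}(x,ξ) ∂U/∂ξ_l(x,ξ) with each r_{j,l} a polynomial function satisfying r_{j,l}(D_λ(x,ξ)) = λ^{τ_l−ν_j} r_{j,l}(x,ξ) for all λ>0 and (x,ξ). Then for every k ≥ 1 and all indices i₁,…,i_k ∈ {1,…,m} there exist a finite set S of pairs of multi-indices (α,β) ∈ ℕⁿ×ℕᵖ with β ≠ 0, and for each (α,β) ∈ S and each γ ∈ ℕᵖ with H_E(γ) ≤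 H_E(β)−1 a polynomial function c_{α,β,γ} : ℝⁿ → ℝ, such that for every smooth U : ℝᴺ → ℝ and every (x,ξ) ∈ ℝᴺ: (X̃_{i_k}⋯X̃_{i_1}U)(x,ξ) − (X_{i_k}⋯X_{i_1}U)(x,ξ) = Σ_{(α,β)∈S} ( Σ_{γ : H_E(γ) ≤ H_E(β)−1} c_{α,β,γ}(x) ξ^γ ) · (∂_x^α ∂_ξ^β U)(x,ξ), where each X_j acts on functions of (x,ξ) through the x-variables only. -/
noncomputable section

/-- The directional derivative along `v` of a function on `ℝⁿ × ℝᵖ`. -/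
def pdProd (n p : ℕ) (v : (Fin n → ℝ) × (Fin p → ℝ))
    (f : ((Fin n → ℝ) × (Fin p → ℝ)) → ℝ) : ((Fin n → ℝ) × (Fin p → ℝ)) → ℝ :=
  fun z => fderiv ℝ f z v

/-- The iterated partial derivative `∂_x^α ∂_ξ^β` on functions `ℝⁿ × ℝᵖ → ℝ`, for
multi-indices `α ∈ ℕⁿ`, `β ∈ ℕᵖ`. -/
def pdMix (n p : ℕ) (α : Fin n → ℕ) (β : Fin p → ℕ)
    (f : ((Fin n → ℝ) × (Fin p → ℝ)) → ℝ) : ((Fin n → ℝ) × (Fin p → ℝ)) → ℝ :=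
  ((List.ofFn fun i : Fin n => (pdProd n p (Pi.single i 1, 0))^[α i]).foldr (· ∘ ·)
    ((List.ofFn fun l : Fin p => (pdProd n p (0, Pi.single l 1))^[β l]).foldr (· ∘ ·) id)) f

/-- Smooth functions. -/
def SF (n p : ℕ) : Subalgebra ℝ (((Fin n → ℝ) × (Fin p → ℝ)) → ℝ) where
  carrier := {f | ContDiff ℝ (⊤ : ℕ∞) f}
  mul_mem' := by
    intro f g hf hg
    rw [Set.mem_ofPred_eq] at *
    exact ContDiff.mul hf hg
  add_mem' := by
    intro f g hf hg
    rw [Set.mem_ofPred_eq] at *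
    exact ContDiff.add hf hg
  algebraMap_mem' := by
    intro c
    rw [Set.mem_ofPred_eq]
    exact (contDiff_const : ContDiff ℝ (⊤ : ℕ∞) fun _ : (Fin n → ℝ) × (Fin p → ℝ) => c)

lemma SF_diff {n p : ℕ} (f : SF n p) : Differentiable ℝ f.1 :=
  ContDiff.differentiable (n := (⊤ : ℕ∞)) f.2 (by simp)

lemma SF_smooth {n p : ℕ} (f : SF n p) : ContDiff ℝ (⊤ : ℕ∞) f.1 := f.2

lemma SF_fd {n p : ℕ} (f : SF n p) : ContDiff ℝ (⊤ : ℕ∞) (fderiv ℝ f.1) :=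
  (SF_smooth f).fderiv_right (by simp)

/-- derivative as an endomorphism -/
def DD {n p : ℕ} (v : (Fin n → ℝ) × (Fin p → ℝ)) : Module.End ℝ (SF n p) where
  toFun f := ⟨fun z => fderiv ℝ f.1 z v, (SF_fd f).clm_apply contDiff_const⟩
  map_add' f g := by
    ext z
    have := fderiv_add (SF_diff f z) (SF_diff g z)
    simp [this]
  map_smul' c f := by
    ext z
    have := fderiv_const_smul (SF_diff f z) c
    simp [this]

lemma DD_apply {n p : ℕ} (v : (Fin n → ℝ) × (Fin p → ℝ)) (f : SF n p) (z) :
    (DD v f).1 z = fderiv ℝ f.1 z v := rfl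

lemma DD_mul {n p : ℕ} (v : (Fin n → ℝ) × (Fin p → ℝ)) (f g : SF n p) :
    DD v (f * g) = DD v f * g + f * DD v g := by
  ext z
  have := fderiv_mul (SF_diff f z) (SF_diff g z)
  have h2 : (DD v (f * g)).1 z = (fderiv ℝ (f.1 * g.1) z) v := rfl
  rw [h2, this]
  simp [DD_apply]
  ring

lemma DD_comm {n p : ℕ} (v w : (Fin n → ℝ) × (Fin p → ℝ)) :
    Commute (DD v) (DD w) := by
  have key : ∀ (v w : (Fin n → ℝ) × (Fin p → ℝ)) (f : SF n p) z, (DD v (DD w f)).1 z =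
      fderiv ℝ (fderiv ℝ f.1) z v w := by
    intro v w f z
    have h2 : (DD v (DD w f)).1 z = (fderiv ℝ (fun z => fderiv ℝ f.1 z w) z) v := rfl
    rw [h2, fderiv_clm_apply ((SF_fd f).differentiable (by simp) z) (by fun_prop)]
    simp
  refine LinearMap.ext fun f => Subtype.ext (funext fun z => ?_)
  have hs := ((SF_smooth f).contDiffAt (x := z)).isSymmSndFDerivAt (by
    simp only [minSmoothness_of_isRCLikeNormedField]; exact WithTop.coe_le_coe.2 (le_top : (2 : ℕ∞) ≤ ⊤))
  exact (key v w f z).trans ((hs v w).trans (key w v f z).symm)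

lemma DD_smul {n p : ℕ} (v : (Fin n → ℝ) × (Fin p → ℝ)) (f : SF n p)
    (T : Module.End ℝ (SF n p)) :
    DD v * (f • T) = (DD v f) • T + f • (DD v * T) := by
  refine LinearMap.ext fun g => ?_
  exact DD_mul v f (T g)

/-- coordinate directions -/
def ee (n p : ℕ) : Fin n ⊕ Fin p → (Fin n → ℝ) × (Fin p → ℝ)
  | .inl i => (Pi.single i 1, 0)
  | .inr l => (0, Pi.single l 1)

/-- coordinate functions -/
def xx (n p : ℕ) (k : Fin n ⊕ Fin p) : SF n p :=
  ⟨fun z => Sum.elim z.1 z.2 k, by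
    change ContDiff ℝ (⊤ : ℕ∞) (fun z : (Fin n → ℝ) × (Fin p → ℝ) => Sum.elim z.1 z.2 k)
    rcases k with i | l
    · simp only [Sum.elim_inl]; fun_prop
    · simp only [Sum.elim_inr]; fun_prop⟩

lemma DD_xx (n p : ℕ) (k k' : Fin n ⊕ Fin p) :
    DD (ee n p k) (xx n p k') = if k = k' then 1 else 0 := by
  have h1 : ∀ (i : Fin n) (z v : (Fin n → ℝ) × (Fin p → ℝ)),
      fderiv ℝ (fun z : (Fin n → ℝ) × (Fin p → ℝ) => z.1 i) z v = v.1 i := by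
    intro i z v
    have : (fun z : (Fin n → ℝ) × (Fin p → ℝ) => z.1 i) =
      ((ContinuousLinearMap.proj i).comp (ContinuousLinearMap.fst ℝ (Fin n → ℝ) (Fin p → ℝ)) :
        ((Fin n → ℝ) × (Fin p → ℝ)) →L[ℝ] ℝ) := rfl
    rw [this, ContinuousLinearMap.fderiv]; rfl
  have h2 : ∀ (i : Fin p) (z v : (Fin n → ℝ) × (Fin p → ℝ)),
      fderiv ℝ (fun z : (Fin n → ℝ) × (Fin p → ℝ) => z.2 i) z v = v.2 i := by
    intro i z v
    have : (fun z : (Fin n → ℝ) × (Fin p → ℝ) => z.2 i) =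
      ((ContinuousLinearMap.proj i).comp (ContinuousLinearMap.snd ℝ (Fin n → ℝ) (Fin p → ℝ)) :
        ((Fin n → ℝ) × (Fin p → ℝ)) →L[ℝ] ℝ) := rfl
    rw [this, ContinuousLinearMap.fderiv]; rfl
  refine Subtype.ext (funext fun z => ?_)
  rw [DD_apply]
  rcases k' with i | l
  · refine (h1 i z _).trans ?_
    rcases k with i' | l'
    · by_cases h : i' = i
      · subst h; simp [ee]
      · simp [ee, h, Ne.symm h, Pi.single_apply]
    · simp [ee]
  · refine (h2 l z _).trans ?_
    rcases k with i' | l'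
    · simp [ee]
    · by_cases h : l' = l
      · subst h; simp [ee]
      · simp [ee, h, Ne.symm h, Pi.single_apply]

/-- polynomials as smooth functions -/
def ev (n p : ℕ) : MvPolynomial (Fin n ⊕ Fin p) ℝ →ₐ[ℝ] SF n p :=
  MvPolynomial.aeval (xx n p)

lemma ev_apply (n p : ℕ) (P : MvPolynomial (Fin n ⊕ Fin p) ℝ) (z) :
    (ev n p P).1 z = MvPolynomial.eval (Sum.elim z.1 z.2) P := by
  induction P using MvPolynomial.induction_on with
  | C a => simp [ev, Subalgebra.coe_algebraMap]
  | add P Q hP hQ => rw [map_add, map_add, ← hP, ← hQ]; rfl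
  | mul_X P k hP => rw [map_mul, map_mul, ← hP]; simp [ev, xx]

lemma DD_one {n p : ℕ} (v : (Fin n → ℝ) × (Fin p → ℝ)) : DD v (1 : SF n p) = 0 := by
  have := DD_mul v 1 1
  simpa using this

lemma DD_ev (n p : ℕ) (k : Fin n ⊕ Fin p) (P : MvPolynomial (Fin n ⊕ Fin p) ℝ) :
    DD (ee n p k) (ev n p P) = ev n p (MvPolynomial.pderiv k P) := by
  induction P using MvPolynomial.induction_on with
  | C a =>
    have : ev n p (MvPolynomial.C a) = a • (1 : SF n p) := by
      simp [ev, Algebra.algebraMap_eq_smul_one]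
    rw [this, map_smul, DD_one]; simp
  | add P Q hP hQ => simp only [map_add, hP, hQ]
  | mul_X P k' hP =>
    rw [map_mul, DD_mul, hP, MvPolynomial.pderiv_mul, map_add, map_mul, map_mul]
    have : ev n p (MvPolynomial.X k') = xx n p k' := by simp [ev]
    rw [this, DD_xx, MvPolynomial.pderiv_X, Pi.single_apply]
    by_cases h : k = k'
    · simp [h]
    · simp [h, Ne.symm h]

lemma prod_single {M : Type*} [Monoid M] : ∀ (k : ℕ) (f : Fin k → M)
    (_ : ∀ i j, Commute (f i) (f j)) (α : Fin k → ℕ) (i : Fin k),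
    f i * (List.ofFn fun j => f j ^ α j).prod
      = (List.ofFn fun j => f j ^ (α + (Pi.single i 1 : Fin k → ℕ)) j).prod := by
  intro k
  induction k with
  | zero => intro f _ α i; exact i.elim0
  | succ k ih =>
    intro f hf α i
    rw [List.ofFn_succ, List.ofFn_succ, List.prod_cons, List.prod_cons]
    refine Fin.cases ?_ (fun i => ?_) i
    · simp [← mul_assoc, pow_succ']
    · have := ih (fun j => f j.succ) (fun i j => hf _ _) (fun j => α j.succ) i
      rw [← mul_assoc, ((hf i.succ 0).pow_right _).eq, mul_assoc, this]
      congr 1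
      · refine congrArg List.prod (congrArg List.ofFn (funext fun j => ?_))
        simp [Pi.single_apply]

/-- mixed derivative -/
def pm {n p : ℕ} (α : Fin n → ℕ) (β : Fin p → ℕ) : Module.End ℝ (SF n p) :=
  (List.ofFn fun i => DD (ee n p (.inl i)) ^ α i).prod *
    (List.ofFn fun l => DD (ee n p (.inr l)) ^ β l).prod

lemma DD_pm_inl {n p : ℕ} (α : Fin n → ℕ) (β : Fin p → ℕ) (i : Fin n) :
    DD (ee n p (.inl i)) * pm α β = pm (α + Pi.single i 1) β := by
  unfold pm
  rw [← mul_assoc, prod_single n (fun i => DD (ee n p (.inl i))) (fun _ _ => DD_comm _ _)]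

lemma DD_pm_inr {n p : ℕ} (α : Fin n → ℕ) (β : Fin p → ℕ) (l : Fin p) :
    DD (ee n p (.inr l)) * pm α β = pm α (β + Pi.single l 1) := by
  unfold pm
  have : Commute (DD (ee n p (.inr l))) (List.ofFn fun i => DD (ee n p (.inl i)) ^ α i).prod := by
    apply Commute.list_prod_right
    intro x hx
    obtain ⟨i, rfl⟩ := (List.mem_ofFn' _ _).1 hx
    exact (DD_comm _ _).pow_right _
  rw [← mul_assoc, this.eq, mul_assoc,
    prod_single p (fun i => DD (ee n p (.inr i))) (fun _ _ => DD_comm _ _)]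

lemma foldr_coe {n p : ℕ} (g : (((Fin n → ℝ) × (Fin p → ℝ)) → ℝ) → ((Fin n → ℝ) × (Fin p → ℝ)) → ℝ)
    (B : Module.End ℝ (SF n p)) (hB : ∀ U : SF n p, g U.1 = (B U).1) : ∀ (k : ℕ)
    (F : Fin k → (((Fin n → ℝ) × (Fin p → ℝ)) → ℝ) → ((Fin n → ℝ) × (Fin p → ℝ)) → ℝ)
    (G : Fin k → Module.End ℝ (SF n p)) (_ : ∀ i (U : SF n p), F i U.1 = (G i U).1) (U : SF n p),
    (List.ofFn F).foldr (· ∘ ·) g U.1 = (((List.ofFn G).prod * B) U).1 := by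
  intro k
  induction k with
  | zero => intro F G _ U; simp [hB]
  | succ k ih =>
    intro F G h U
    rw [List.ofFn_succ, List.ofFn_succ, List.prod_cons, List.foldr_cons, mul_assoc]
    have := ih (fun i => F i.succ) (fun i => G i.succ) (fun i => h _) U
    simp only [Function.comp_apply, this, h]
    rfl

lemma pdMix_coe {n p : ℕ} (α : Fin n → ℕ) (β : Fin p → ℕ) (U : SF n p) :
    pdMix n p α β U.1 = (pm α β U).1 := by
  have it : ∀ (k : ℕ) v (U : SF n p), (pdProd n p v)^[k] U.1 = ((DD v ^ k) U).1 := by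
    intro k v
    induction k with
    | zero => intro U; rfl
    | succ k ih =>
      intro U
      rw [Function.iterate_succ_apply, pow_succ]
      exact ih (DD v U)
  unfold pdMix pm
  refine foldr_coe _ _ (fun U => ?_) _ _ _ (fun i U => it _ _ U) U
  have := foldr_coe (n := n) (p := p) id 1 (fun _ => rfl) p _ _ (fun l U => it (β l) (ee n p (.inr l)) U) U
  rw [mul_one] at this
  exact this

/-- ξ-weight of a monomial -/
def wt {n p : ℕ} (τ : Fin p → ℕ) (μ : (Fin n ⊕ Fin p) →₀ ℕ) : ℕ := ∑ l, μ (.inr l) * τ l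

/-- polynomials of ξ-weight less than `d` -/
def Pol (n : ℕ) {p : ℕ} (τ : Fin p → ℕ) (d : ℕ) : AddSubmonoid (SF n p) :=
  AddSubmonoid.closure {f | ∃ μ c, wt τ μ < d ∧ f = ev n p (MvPolynomial.monomial μ c)}

lemma Pol_mul {n p : ℕ} (τ : Fin p → ℕ) {d e k : ℕ} (h : d + e ≤ k + 1) {f g : SF n p}
    (hf : f ∈ Pol n τ d) (hg : g ∈ Pol n τ e) : f * g ∈ Pol n τ k := by
  induction hf using AddSubmonoid.closure_induction with
  | zero => rw [zero_mul]; exact zero_mem _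
  | add x y _ _ hx hy => rw [add_mul]; exact add_mem hx hy
  | mem x hx =>
    obtain ⟨μ, c, hμ, rfl⟩ := hx
    induction hg using AddSubmonoid.closure_induction with
    | zero => rw [mul_zero]; exact zero_mem _
    | add x y _ _ hx hy => rw [mul_add]; exact add_mem hx hy
    | mem x hx =>
      obtain ⟨μ', c', hμ', rfl⟩ := hx
      refine AddSubmonoid.subset_closure ⟨μ + μ', c * c', ?_, ?_⟩
      · have : wt τ (μ + μ') = wt τ μ + wt τ μ' := by
          simp [wt, add_mul, Finset.sum_add_distrib]
        omega
      · rw [← map_mul, MvPolynomial.monomial_mul]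

lemma Pol_Dx {n p : ℕ} (τ : Fin p → ℕ) {d : ℕ} {f : SF n p}
    (hf : f ∈ Pol n τ d) (i : Fin n) : DD (ee n p (.inl i)) f ∈ Pol n τ d := by
  induction hf using AddSubmonoid.closure_induction with
  | zero => rw [map_zero]; exact zero_mem _
  | add x y _ _ hx hy => rw [map_add]; exact add_mem hx hy
  | mem x hx =>
    obtain ⟨μ, c, hμ, rfl⟩ := hx
    rw [DD_ev, MvPolynomial.pderiv_monomial]
    refine AddSubmonoid.subset_closure ⟨_, _, ?_, rfl⟩
    simpa [wt, Finsupp.single_apply] using hμ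

/-- If `d ≤ τ l` the derivative vanishes; otherwise the weight drops by `τ l`. -/
lemma Pol_Dξ {n p : ℕ} (τ : Fin p → ℕ) {d e : ℕ} {f : SF n p}
    (hf : f ∈ Pol n τ d) (l : Fin p) (h : d ≤ e + τ l) :
    DD (ee n p (.inr l)) f ∈ Pol n τ e := by
  induction hf using AddSubmonoid.closure_induction with
  | zero => rw [map_zero]; exact zero_mem _
  | add x y _ _ hx hy => rw [map_add]; exact add_mem hx hy
  | mem x hx =>
    obtain ⟨μ, c, hμ, rfl⟩ := hx
    rw [DD_ev, MvPolynomial.pderiv_monomial]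
    by_cases h0 : μ (.inr l) = 0
    · simp [h0]
    refine AddSubmonoid.subset_closure ⟨_, _, ?_, rfl⟩
    obtain ⟨μ', rfl⟩ : ∃ μ', μ = μ' + Finsupp.single (.inr l) 1 :=
      ⟨μ - Finsupp.single (.inr l) 1, by
        rw [tsub_add_cancel_of_le]; simpa [Finsupp.single_le_iff] using Nat.one_le_iff_ne_zero.2 h0⟩
    have : wt τ (μ' + Finsupp.single (.inr l) 1 : (Fin n ⊕ Fin p) →₀ ℕ) = wt τ μ' + τ l := by
      simp [wt, add_mul, Finset.sum_add_distrib, Finsupp.single_apply]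
    rw [add_tsub_cancel_right]
    omega

lemma Pol_zero {n p : ℕ} (τ : Fin p → ℕ) {f : SF n p} (hf : f ∈ Pol n τ 0) : f = 0 := by
  induction hf using AddSubmonoid.closure_induction with
  | zero => rfl
  | add x y _ _ hx hy => simp [hx, hy]
  | mem x hx => obtain ⟨μ, c, hμ, rfl⟩ := hx; omega

lemma Pol_a {n p : ℕ} (τ : Fin p → ℕ) (P : MvPolynomial (Fin n) ℝ) :
    ev n p (MvPolynomial.rename Sum.inl P) ∈ Pol n τ 1 := by
  induction P using MvPolynomial.induction_on' with
  | add P Q hP hQ => rw [map_add, map_add]; exact add_mem hP hQ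
  | monomial μ c =>
    rw [MvPolynomial.rename_monomial]
    refine AddSubmonoid.subset_closure ⟨_, _, ?_, rfl⟩
    have : ∀ l : Fin p, Finsupp.mapDomain (Sum.inl : Fin n → Fin n ⊕ Fin p) μ (.inr l) = 0 :=
      fun l => Finsupp.mapDomain_of_notMem_range _ _ (by simp)
    simp [wt, this]

lemma Pol_r {n p : ℕ} (σ : Fin n → ℕ) (τ : Fin p → ℕ) (ν t : ℕ) (hν : 0 < ν)
    (P : MvPolynomial (Fin n ⊕ Fin p) ℝ)
    (h : ∀ (x : Fin n → ℝ) (ξ : Fin p → ℝ),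
      MvPolynomial.eval (Sum.elim (fun i => (2:ℝ) ^ (σ i) * x i) (fun l' => (2:ℝ) ^ (τ l') * ξ l')) P
        = (2:ℝ) ^ ((t : ℤ) - (ν : ℤ)) * MvPolynomial.eval (Sum.elim x ξ) P) :
    ev n p P ∈ Pol n τ t := by
  let s : Fin n ⊕ Fin p → ℕ := Sum.elim σ τ
  let w : ((Fin n ⊕ Fin p) →₀ ℕ) → ℕ := fun μ => ∑ k, s k * μ k
  have hQ : (∑ μ ∈ P.support, MvPolynomial.monomial μ
      (P.coeff μ * ((2:ℝ) ^ (w μ + ν) - 2 ^ t))) = 0 := by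
    apply MvPolynomial.funext
    intro y
    have h1 := h (fun i => y (.inl i)) (fun l => y (.inr l))
    have e1 : Sum.elim (fun i => (2:ℝ) ^ (σ i) * y (.inl i)) (fun l' => (2:ℝ) ^ (τ l') * y (.inr l'))
      = fun k => (2:ℝ) ^ s k * y k := by funext k; cases k <;> rfl
    have e2 : Sum.elim (fun i => y (.inl i)) (fun l => y (.inr l)) = y := by
      funext k; cases k <;> rfl
    rw [e1, e2, zpow_sub₀ two_ne_zero, zpow_natCast, zpow_natCast, div_mul_eq_mul_div,
      eq_div_iff (by positivity), MvPolynomial.eval_eq', MvPolynomial.eval_eq'] at h1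
    rw [map_sum, map_zero]
    rw [← sub_eq_zero, Finset.sum_mul, Finset.mul_sum, ← Finset.sum_sub_distrib] at h1
    rw [← h1]
    refine Finset.sum_congr rfl fun μ _ => ?_
    rw [MvPolynomial.eval_monomial, Finsupp.prod_fintype _ _ (by simp)]
    simp only [mul_pow, Finset.prod_mul_distrib, ← pow_mul, Finset.prod_pow_eq_pow_sum]
    rw [pow_add]
    ring
  rw [MvPolynomial.as_sum P, map_sum]
  refine sum_mem fun μ hμ => AddSubmonoid.subset_closure ⟨_, _, ?_, rfl⟩
  have h2 := congrArg (MvPolynomial.coeff μ) hQ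
  rw [MvPolynomial.coeff_sum] at h2
  simp only [MvPolynomial.coeff_monomial, Finset.sum_ite_eq', hμ, if_true, MvPolynomial.coeff_zero,
    mul_eq_zero, MvPolynomial.mem_support_iff.1 hμ, false_or, sub_eq_zero] at h2
  have h3 := pow_right_injective₀ (by norm_num : (0:ℝ) < 2) (by norm_num) h2
  have h4 : wt τ μ ≤ w μ := by
    simp only [w, wt, Fintype.sum_sum_type, s, Sum.elim_inr, mul_comm]
    omega
  omega

/-- The admissible operators -/
def WW (n : ℕ) {p : ℕ} (τ : Fin p → ℕ) : AddSubmonoid (Module.End ℝ (SF n p)) :=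
  AddSubmonoid.closure {T | ∃ f α β, f ∈ Pol n τ (∑ l, β l * τ l) ∧ T = f • (pm α β : Module.End ℝ (SF n p))}

/-- Operators in x only -/
def VV (n : ℕ) {p : ℕ} (τ : Fin p → ℕ) : AddSubmonoid (Module.End ℝ (SF n p)) :=
  AddSubmonoid.closure {T | ∃ f α, f ∈ Pol n τ 1 ∧ T = f • (pm α 0 : Module.End ℝ (SF n p))}

lemma wsum {p : ℕ} (τ β : Fin p → ℕ) (l : Fin p) :
    ∑ l', (β + (Pi.single l 1 : Fin p → ℕ)) l' * τ l' = (∑ l', β l' * τ l') + τ l := by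
  simp [add_mul, Finset.sum_add_distrib, Pi.single_apply]

lemma WW_x {n p : ℕ} (τ : Fin p → ℕ) {g : SF n p} (hg : g ∈ Pol n τ 1) (i : Fin n)
    {T : Module.End ℝ (SF n p)} (hT : T ∈ WW n τ) :
    g • (DD (ee n p (.inl i)) * T) ∈ WW n τ := by
  induction hT using AddSubmonoid.closure_induction with
  | zero => simp
  | add x y _ _ hx hy => rw [mul_add, smul_add]; exact add_mem hx hy
  | mem x hx =>
    obtain ⟨f, α, β, hf, rfl⟩ := hx
    rw [DD_smul, smul_add, smul_smul, smul_smul, DD_pm_inl]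
    refine add_mem (AddSubmonoid.subset_closure ⟨_, _, _, ?_, rfl⟩)
      (AddSubmonoid.subset_closure ⟨_, _, _, ?_, rfl⟩)
    · exact Pol_mul τ (by omega) hg (Pol_Dx τ hf i)
    · exact Pol_mul τ (by omega) hg hf

lemma VV_x {n p : ℕ} (τ : Fin p → ℕ) {g : SF n p} (hg : g ∈ Pol n τ 1) (i : Fin n)
    {T : Module.End ℝ (SF n p)} (hT : T ∈ VV n τ) :
    g • (DD (ee n p (.inl i)) * T) ∈ VV n τ := by
  induction hT using AddSubmonoid.closure_induction with
  | zero => simp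
  | add x y _ _ hx hy => rw [mul_add, smul_add]; exact add_mem hx hy
  | mem x hx =>
    obtain ⟨f, α, hf, rfl⟩ := hx
    rw [DD_smul, smul_add, smul_smul, smul_smul, DD_pm_inl]
    refine add_mem (AddSubmonoid.subset_closure ⟨_, _, ?_, rfl⟩)
      (AddSubmonoid.subset_closure ⟨_, _, ?_, rfl⟩)
    · exact Pol_mul τ (by omega) hg (Pol_Dx τ hf i)
    · exact Pol_mul τ (by omega) hg hf

lemma WW_xi {n p : ℕ} (τ : Fin p → ℕ) (l : Fin p) {g : SF n p} (hg : g ∈ Pol n τ (τ l))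
    {T : Module.End ℝ (SF n p)} (hT : T ∈ WW n τ) :
    g • (DD (ee n p (.inr l)) * T) ∈ WW n τ := by
  induction hT using AddSubmonoid.closure_induction with
  | zero => simp
  | add x y _ _ hx hy => rw [mul_add, smul_add]; exact add_mem hx hy
  | mem x hx =>
    obtain ⟨f, α, β, hf, rfl⟩ := hx
    rw [DD_smul, smul_add, smul_smul, smul_smul, DD_pm_inr]
    refine add_mem (AddSubmonoid.subset_closure ⟨_, _, _, ?_, rfl⟩)
      (AddSubmonoid.subset_closure ⟨_, _, _, ?_, rfl⟩)
    · by_cases h : (∑ l, β l * τ l) ≤ τ l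
      · rw [Pol_zero τ (Pol_Dξ τ hf l (e := 0) (by omega)), mul_zero]; exact zero_mem _
      · exact Pol_mul τ (e := (∑ l, β l * τ l) - τ l) (by omega) hg (Pol_Dξ τ hf l (by omega))
    · rw [wsum]; exact Pol_mul τ (by omega) hg hf

lemma VV_xi {n p : ℕ} (τ : Fin p → ℕ) (l : Fin p) (hl : 0 < τ l) {g : SF n p}
    (hg : g ∈ Pol n τ (τ l))
    {T : Module.End ℝ (SF n p)} (hT : T ∈ VV n τ) :
    g • (DD (ee n p (.inr l)) * T) ∈ WW n τ := by
  induction hT using AddSubmonoid.closure_induction with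
  | zero => simp
  | add x y _ _ hx hy => rw [mul_add, smul_add]; exact add_mem hx hy
  | mem x hx =>
    obtain ⟨f, α, hf, rfl⟩ := hx
    rw [DD_smul, smul_add, smul_smul, smul_smul, DD_pm_inr,
      Pol_zero τ (Pol_Dξ τ hf l (e := 0) (by omega)), mul_zero, zero_smul, zero_add]
    refine AddSubmonoid.subset_closure ⟨_, _, _, ?_, rfl⟩
    rw [wsum]; exact Pol_mul τ (by simp) hg hf

lemma VV_one {n p : ℕ} (τ : Fin p → ℕ) : (1 : Module.End ℝ (SF n p)) ∈ VV n τ := by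
  refine AddSubmonoid.subset_closure ⟨1, 0, ?_, ?_⟩
  · simpa using Pol_a (p := p) τ (1 : MvPolynomial (Fin n) ℝ)
  · simp [pm]

/-- Normal form. -/
def HasNF (n : ℕ) {p : ℕ} (τ : Fin p → ℕ) (T : Module.End ℝ (SF n p)) : Prop :=
  ∃ F : ((Fin n → ℕ) × (Fin p → ℕ) × (Fin p → ℕ)) →₀ MvPolynomial (Fin n) ℝ,
    (∀ t ∈ F.support, (∑ l, t.2.2 l * τ l) + 1 ≤ ∑ l, t.2.1 l * τ l) ∧
    ∀ (U : SF n p) z, (T U).1 z = F.sum fun t P =>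
      MvPolynomial.eval z.1 P * (∏ l, z.2 l ^ (t.2.2 l)) * (pm t.1 t.2.1 U).1 z

lemma HasNF_zero {n p : ℕ} (τ : Fin p → ℕ) : HasNF n τ (0 : Module.End ℝ (SF n p)) :=
  ⟨0, by simp, by simp⟩

lemma HasNF_add {n p : ℕ} (τ : Fin p → ℕ) {T T' : Module.End ℝ (SF n p)}
    (h : HasNF n τ T) (h' : HasNF n τ T') : HasNF n τ (T + T') := by
  classical
  obtain ⟨F, hF, hT⟩ := h
  obtain ⟨F', hF', hT'⟩ := h'
  refine ⟨F + F', fun t ht => ?_, fun U z => ?_⟩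
  · rcases Finset.mem_union.1 (Finsupp.support_add ht) with h | h
    · exact hF t h
    · exact hF' t h
  · rw [Finsupp.sum_add_index' (by simp) (by intros; simp [add_mul]), ← hT, ← hT']
    rfl

lemma WW_NF {n p : ℕ} (τ : Fin p → ℕ) {T : Module.End ℝ (SF n p)} (hT : T ∈ WW n τ) :
    HasNF n τ T := by
  classical
  induction hT using AddSubmonoid.closure_induction with
  | zero => exact HasNF_zero τ
  | add x y _ _ hx hy => exact HasNF_add τ hx hy
  | mem x hx =>
    obtain ⟨f, α, β, hf, rfl⟩ := hx
    unfold Pol at hf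
    induction hf using AddSubmonoid.closure_induction with
    | zero => rw [zero_smul]; exact HasNF_zero τ
    | add x y _ _ hx hy => rw [add_smul]; exact HasNF_add τ hx hy
    | mem x hx =>
      obtain ⟨μ, c, hμ, rfl⟩ := hx
      refine ⟨Finsupp.single (α, β, fun l => μ (.inr l)) (MvPolynomial.monomial
        (Finsupp.equivFunOnFinite.symm fun i => μ (.inl i)) c), fun t ht => ?_, fun U z => ?_⟩
      · have := Finsupp.support_single_subset ht
        rw [Finset.mem_singleton] at this
        subst this
        exact hμ
      · rw [Finsupp.sum_single_index (by simp)]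
        have : ((ev n p (MvPolynomial.monomial μ c) • pm α β) U).1 z =
          (ev n p (MvPolynomial.monomial μ c)).1 z * (pm α β U).1 z := rfl
        rw [this, ev_apply, MvPolynomial.eval_monomial, MvPolynomial.eval_monomial,
          Finsupp.prod_fintype _ _ (by simp), Finsupp.prod_fintype _ _ (by simp),
          Fintype.prod_sum_type]
        simp [mul_assoc]

lemma foldl_coe {n p m : ℕ}
    (X : Fin m → (((Fin n → ℝ) × (Fin p → ℝ)) → ℝ) → ((Fin n → ℝ) × (Fin p → ℝ)) → ℝ)
    (Y : Fin m → Module.End ℝ (SF n p)) (h : ∀ j (U : SF n p), X j U.1 = (Y j U).1)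
    (L : List (Fin m)) : ∀ (U : SF n p),
    L.foldl (fun V j => X j V) U.1 = ((L.foldl (fun T j => Y j * T) 1) U).1 := by
  induction L using List.reverseRecOn with
  | nil => intro U; rfl
  | append_singleton L j ih =>
    intro U
    simp only [List.foldl_append, List.foldl_cons, List.foldl_nil]
    rw [ih, h]; rfl

/-- Let `X_j = Σ_i a_{j,i}(x) ∂_{x_i}` be vector fields on `ℝⁿ` with
polynomial coefficients, `δ_λ`-homogeneous of degree `ν_j`, and let
`X̃_j = X_j + Σ_l r_{j,l}(x,ξ) ∂_{ξ_l}` on `ℝᴺ = ℝⁿ×ℝᵖ` with polynomial `r_{j,l}`,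
`D_λ`-homogeneous of degree `ν_j`.  Then for all indices `i₁,…,i_k ∈ {1,…,m}` (`k ≥ 1`)
the difference `X̃_{i_k}⋯X̃_{i_1} − X_{i_k}⋯X_{i_1}` can be written as a finite sum
`Σ_{(α,β)} (Σ_{H_E(γ) ≤ H_E(β)−1} c_{α,β,γ}(x) ξ^γ) ∂_x^α ∂_ξ^β` with `β ≠ 0` and
polynomial coefficients `c_{α,β,γ}` depending only on `x`.  (Here the sum over pairs
`(α,β)` and admissible `γ` is encoded as a finite sum over triples `(α,β,γ)`.) -/
theorem stmt_0 (n p m : ℕ) (hn : 0 < n) (hp : 0 < p) (hm : 0 < m)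
    (σ : Fin n → ℕ) (τ : Fin p → ℕ) (ν : Fin m → ℕ)
    (hσ : ∀ i, 0 < σ i) (hτ : ∀ l, 0 < τ l) (hν : ∀ j, 0 < ν j)
    -- the coefficients of the `X_j`: polynomial and `δ_λ`-homogeneous of degree `σ_i − ν_j`
    (a : Fin m → Fin n → (Fin n → ℝ) → ℝ)
    (haPoly : ∀ j i, ∃ P : MvPolynomial (Fin n) ℝ, ∀ x, a j i x = MvPolynomial.eval x P)
    (haHom : ∀ j i, ∀ lam : ℝ, 0 < lam → ∀ x : Fin n → ℝ,
      a j i (fun i' => lam ^ (σ i') * x i') = lam ^ ((σ i : ℤ) - (ν j : ℤ)) * a j i x)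
    -- the extra coefficients of the `X̃_j`: polynomial and `D_λ`-homogeneous of
    -- degree `τ_l − ν_j`
    (r : Fin m → Fin p → ((Fin n → ℝ) × (Fin p → ℝ)) → ℝ)
    (hrPoly : ∀ j l, ∃ P : MvPolynomial (Fin n ⊕ Fin p) ℝ,
      ∀ (x : Fin n → ℝ) (ξ : Fin p → ℝ),
        r j l (x, ξ) = MvPolynomial.eval (Sum.elim x ξ) P)
    (hrHom : ∀ j l, ∀ lam : ℝ, 0 < lam → ∀ (x : Fin n → ℝ) (ξ : Fin p → ℝ),
      r j l (fun i => lam ^ (σ i) * x i, fun l' => lam ^ (τ l') * ξ l')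
        = lam ^ ((τ l : ℤ) - (ν j : ℤ)) * r j l (x, ξ))
    -- `X_j` acting on functions of `(x,ξ)` through the `x`-variables only
    (X : Fin m → (((Fin n → ℝ) × (Fin p → ℝ)) → ℝ) → ((Fin n → ℝ) × (Fin p → ℝ)) → ℝ)
    (hXdef : ∀ j U z, X j U z = ∑ i, a j i z.1 * fderiv ℝ U z (Pi.single i 1, 0))
    -- the lifted vector fields `X̃_j = X_j + R_j`
    (Xt : Fin m → (((Fin n → ℝ) × (Fin p → ℝ)) → ℝ) → ((Fin n → ℝ) × (Fin p → ℝ)) → ℝ)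
    (hXtdef : ∀ j U z, Xt j U z =
      X j U z + ∑ l, r j l z * fderiv ℝ U z (0, Pi.single l 1)) :
    ∀ (k : ℕ), 1 ≤ k → ∀ ι : Fin k → Fin m,
      ∃ S : Finset ((Fin n → ℕ) × (Fin p → ℕ) × (Fin p → ℕ)),
      ∃ c : (Fin n → ℕ) → (Fin p → ℕ) → (Fin p → ℕ) → (Fin n → ℝ) → ℝ,
        (∀ t ∈ S, t.2.1 ≠ 0 ∧ (∑ l, t.2.2 l * τ l) + 1 ≤ ∑ l, t.2.1 l * τ l) ∧
        (∀ α β γ, ∃ P : MvPolynomial (Fin n) ℝ,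
          ∀ x, c α β γ x = MvPolynomial.eval x P) ∧
        (∀ U : ((Fin n → ℝ) × (Fin p → ℝ)) → ℝ, ContDiff ℝ (⊤ : ℕ∞) U →
          ∀ z : (Fin n → ℝ) × (Fin p → ℝ),
            (List.ofFn ι).foldl (fun V j => Xt j V) U z
              - (List.ofFn ι).foldl (fun V j => X j V) U z
            = ∑ t ∈ S,
                c t.1 t.2.1 t.2.2 z.1 * (∏ l, z.2 l ^ (t.2.2 l))
                  * pdMix n p t.1 t.2.1 U z) := by
  choose A hA using haPoly
  choose R hR using hrPoly
  let aa : Fin m → Fin n → SF n p := fun j i => ev n p (MvPolynomial.rename Sum.inl (A j i))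
  let rr : Fin m → Fin p → SF n p := fun j l => ev n p (R j l)
  have haa : ∀ j i, aa j i ∈ Pol n τ 1 := fun j i => Pol_a τ _
  have hrr : ∀ j l, rr j l ∈ Pol n τ (τ l) := by
    intro j l
    refine Pol_r σ τ (ν j) (τ l) (hν j) _ fun x ξ => ?_
    rw [← hR, ← hR]
    exact hrHom j l 2 (by norm_num) x ξ
  let Y : Fin m → Module.End ℝ (SF n p) := fun j => ∑ i, aa j i • DD (ee n p (.inl i))
  let Q : Fin m → Module.End ℝ (SF n p) := fun j => ∑ l, rr j l • DD (ee n p (.inr l))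
  have hY : ∀ j (U : SF n p), X j U.1 = (Y j U).1 := by
    intro j U
    funext z
    simp only [hXdef, Y, LinearMap.sum_apply, AddSubmonoidClass.coe_finsetSum, Finset.sum_apply]
    refine Finset.sum_congr rfl fun i _ => ?_
    have : ((aa j i • DD (ee n p (.inl i))) U).1 z =
      (aa j i).1 z * (DD (ee n p (.inl i)) U).1 z := rfl
    rw [this, DD_apply, ev_apply, MvPolynomial.eval_rename, hA]
    rfl
  have hYQ : ∀ j (U : SF n p), Xt j U.1 = ((Y j + Q j) U).1 := by
    intro j U
    funext z
    have e : ((Y j + Q j) U).1 z = (Y j U).1 z + (Q j U).1 z := rfl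
    rw [e, hXtdef, hY]
    congr 1
    simp only [Q, LinearMap.sum_apply, AddSubmonoidClass.coe_finsetSum, Finset.sum_apply]
    refine Finset.sum_congr rfl fun l _ => ?_
    have : ((rr j l • DD (ee n p (.inr l))) U).1 z =
      (rr j l).1 z * (DD (ee n p (.inr l)) U).1 z := rfl
    rw [this, DD_apply, ev_apply, ← hR]
    rfl
  have hYV : ∀ j T, T ∈ VV n τ → Y j * T ∈ VV n τ := by
    intro j T hT
    simp only [Y, Finset.sum_mul]
    exact sum_mem fun i _ => VV_x τ (haa j i) i hT
  have hYW : ∀ j T, T ∈ WW n τ → Y j * T ∈ WW n τ := by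
    intro j T hT
    simp only [Y, Finset.sum_mul]
    exact sum_mem fun i _ => WW_x τ (haa j i) i hT
  have hQW : ∀ j T, T ∈ WW n τ → Q j * T ∈ WW n τ := by
    intro j T hT
    simp only [Q, Finset.sum_mul]
    exact sum_mem fun l _ => WW_xi τ l (hrr j l) hT
  have hQV : ∀ j T, T ∈ VV n τ → Q j * T ∈ WW n τ := by
    intro j T hT
    simp only [Q, Finset.sum_mul]
    exact sum_mem fun l _ => VV_xi τ l (hτ l) (hrr j l) hT
  have main : ∀ L : List (Fin m), L.foldl (fun T j => Y j * T) 1 ∈ VV n τ ∧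
      ∃ D ∈ WW n τ, L.foldl (fun T j => (Y j + Q j) * T) 1 =
        L.foldl (fun T j => Y j * T) 1 + D := by
    intro L
    induction L using List.reverseRecOn with
    | nil => exact ⟨VV_one τ, 0, zero_mem _, by
      rw [List.foldl_nil, List.foldl_nil, add_zero]⟩
    | append_singleton L j ih =>
      obtain ⟨h1, D, h2, h3⟩ := ih
      simp only [List.foldl_append, List.foldl_cons, List.foldl_nil]
      refine ⟨hYV j _ h1, Y j * D + Q j * D + Q j * L.foldl (fun T j => Y j * T) 1,
        add_mem (add_mem (hYW j _ h2) (hQW j _ h2)) (hQV j _ h1), ?_⟩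
      rw [h3, mul_add, add_mul, add_mul]
      abel
  intro k _ ι
  obtain ⟨-, D, hD, hD'⟩ := main (List.ofFn ι)
  obtain ⟨F, hF, hT⟩ := WW_NF τ hD
  refine ⟨F.support, fun α β γ x => MvPolynomial.eval x (F (α, β, γ)), fun t ht => ⟨?_, hF t ht⟩,
    fun α β γ => ⟨_, fun x => rfl⟩, fun U hU z => ?_⟩
  · intro h0
    have := hF t ht
    simp [h0] at this
  · have e1 := foldl_coe Xt (fun j => Y j + Q j) hYQ (List.ofFn ι) ⟨U, hU⟩
    have e2 := foldl_coe X Y hY (List.ofFn ι) ⟨U, hU⟩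
    have e3 := hT ⟨U, hU⟩ z
    simp only [] at e1 e2
    rw [e1, e2, hD']
    refine Eq.trans ?_ (e3.trans ?_)
    · exact add_sub_cancel_left _ _
    · rw [Finsupp.sum]
      refine Finset.sum_congr rfl fun t _ => ?_
      rw [← pdMix_coe]

end
end

section
/- Let τ₁,…,τ_p be positive integers with dilations E_λ on ℝᵖ, homogeneous norm ρ_E and E-weights H_E. There exists a sequence of smooth compactly supported functions θ_j : ℝᵖ → ℝ (j ∈ ℕ) such that: (i) 0 ≤ θ_j ≤ 1 on ℝᵖ for every j; (ii) the sets Ω_j = {ξ ∈ ℝᵖ : θ_j(ξ) = 1} satisfy Ω_j ⋐ Ω_{j+1} (Ω_j is compactly contained in the interior of Ω_{j+1}) and ⋃_{j} Ω_j = ℝᵖ; (iii) for every multi-index β ∈ ℕᵖ with β ≠ 0, every compact set K ⊆ ℝⁿ, and every function of the form r(x,ξ) = Σ_{γ : H_E(γ) ≤ H_E(β)−1} c_γ(x) ξ^γ with finitely many continuous coefficient functions c_γ : ℝⁿ → ℝ, there exists a constant C > 0 such that |r(x,ξ) · ∂_ξ^β θ_j(ξ)| ≤ C for every j ∈ ℕ,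 every x ∈ K and every ξ ∈ ℝᵖ. -/
noncomputable section

/-- The partial derivative `∂/∂ξ_l` on functions `ℝᵖ → ℝ`. -/
def pdE (p : ℕ) (l : Fin p) (f : (Fin p → ℝ) → ℝ) : (Fin p → ℝ) → ℝ :=
  fun ξ => fderiv ℝ f ξ (Pi.single l 1)

/-- The iterated partial derivative `∂_ξ^β` on functions `ℝᵖ → ℝ`, for a
multi-index `β ∈ ℕᵖ`. -/
def pdEPow (p : ℕ) (β : Fin p → ℕ) (f : (Fin p → ℝ) → ℝ) : (Fin p → ℝ) → ℝ :=
  ((List.ofFn fun l : Fin p => (pdE p l)^[β l]).foldr (· ∘ ·) id) f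

def dilE (p : ℕ) (τ : Fin p → ℕ) (μ : ℝ) : (Fin p → ℝ) →L[ℝ] (Fin p → ℝ) :=
  ContinuousLinearMap.pi fun l => (μ ^ τ l) • ContinuousLinearMap.proj l

lemma dilE_apply (p : ℕ) (τ : Fin p → ℕ) (μ : ℝ) (ξ : Fin p → ℝ) (l : Fin p) :
    dilE p τ μ ξ l = μ ^ τ l * ξ l := by
  simp [dilE]

lemma dilE_single (p : ℕ) (τ : Fin p → ℕ) (μ : ℝ) (l : Fin p) :
    dilE p τ μ (Pi.single l 1) = (μ ^ τ l) • (Pi.single l 1 : Fin p → ℝ) := by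
  ext k
  rw [dilE_apply]
  by_cases h : k = l
  · subst h; simp
  · simp [h]

def Good (p : ℕ) (f : (Fin p → ℝ) → ℝ) : Prop :=
  ContDiff ℝ (⊤ : ℕ∞) f ∧ HasCompactSupport f

lemma good_pdE (p : ℕ) (l : Fin p) (f : (Fin p → ℝ) → ℝ) (hf : Good p f) :
    Good p (pdE p l f) := by
  refine ⟨?_, hf.2.fderiv_apply ℝ _⟩
  have h : ContDiff ℝ (⊤ : ℕ∞) (fderiv ℝ f) := hf.1.fderiv_right (by simp)
  exact h.clm_apply contDiff_const

lemma pdE_scale (p : ℕ) (τ : Fin p → ℕ) (μ : ℝ) (l : Fin p) (a : ℝ) (f : (Fin p → ℝ) → ℝ)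
    (hf : Good p f) :
    pdE p l (fun ξ => a * f (dilE p τ μ ξ)) =
      fun ξ => (a * μ ^ τ l) * pdE p l f (dilE p τ μ ξ) := by
  ext ξ
  have hd : DifferentiableAt ℝ f (dilE p τ μ ξ) := (hf.1.differentiable (by simp)) _
  have h1 : HasFDerivAt (fun ξ => a * f (dilE p τ μ ξ))
      (a • (fderiv ℝ f (dilE p τ μ ξ)).comp (dilE p τ μ)) ξ :=
    (hd.hasFDerivAt.comp ξ (dilE p τ μ).hasFDerivAt).const_mul a
  unfold pdE
  rw [h1.fderiv]
  simp [dilE_single, mul_assoc]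

lemma iter_scale (p : ℕ) (τ : Fin p → ℕ) (μ : ℝ) (l : Fin p) (f : (Fin p → ℝ) → ℝ)
    (hf : Good p f) (a : ℝ) (k : ℕ) :
    Good p ((pdE p l)^[k] f) ∧ (pdE p l)^[k] (fun ξ => a * f (dilE p τ μ ξ)) =
      fun ξ => (a * μ ^ (k * τ l)) * (pdE p l)^[k] f (dilE p τ μ ξ) := by
  induction k with
  | zero => exact ⟨hf, by simp⟩
  | succ k ih =>
    rw [Function.iterate_succ_apply', Function.iterate_succ_apply', ih.2]
    refine ⟨good_pdE p l _ ih.1, ?_⟩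
    rw [pdE_scale p τ μ l _ _ ih.1]
    ext ξ
    rw [Nat.succ_mul, pow_add]; ring

lemma list_scale (p : ℕ) (τ : Fin p → ℕ) (μ : ℝ) (β : Fin p → ℕ) (f : (Fin p → ℝ) → ℝ)
    (hf : Good p f) (L : List (Fin p)) :
    Good p (((L.map fun l => (pdE p l)^[β l]).foldr (· ∘ ·) id) f) ∧
    ((L.map fun l => (pdE p l)^[β l]).foldr (· ∘ ·) id) (fun ξ => f (dilE p τ μ ξ)) =
      fun ξ => μ ^ ((L.map fun l => β l * τ l).sum) *
        ((L.map fun l => (pdE p l)^[β l]).foldr (· ∘ ·) id) f (dilE p τ μ ξ) := by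
  induction L with
  | nil => exact ⟨hf, by simp⟩
  | cons l L ih =>
    simp only [List.map_cons, List.foldr_cons, Function.comp_apply, List.sum_cons]
    rw [ih.2]
    have h := iter_scale p τ μ l _ ih.1 (μ ^ ((L.map fun l => β l * τ l).sum)) (β l)
    refine ⟨h.1, ?_⟩
    rw [h.2]
    ext ξ
    rw [pow_add]; ring

lemma pow_scale (p : ℕ) (τ : Fin p → ℕ) (μ : ℝ) (β : Fin p → ℕ) (f : (Fin p → ℝ) → ℝ)
    (hf : Good p f) :
    Good p (pdEPow p β f) ∧ ∀ ξ, pdEPow p β (fun ξ => f (dilE p τ μ ξ)) ξ =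
      μ ^ (∑ l, β l * τ l) * pdEPow p β f (dilE p τ μ ξ) := by
  have h := list_scale p τ μ β f hf (List.finRange p)
  unfold pdEPow
  rw [List.ofFn_eq_map]
  refine ⟨h.1, fun ξ => ?_⟩
  rw [h.2, ← List.ofFn_eq_map, List.sum_ofFn]

lemma term_bound (p : ℕ) (τ : Fin p → ℕ) (β γ : Fin p → ℕ) (f : (Fin p → ℝ) → ℝ)
    (hf : Good p f) (hγ : (∑ l, γ l * τ l) + 1 ≤ ∑ l, β l * τ l) :
    ∃ M : ℝ, 0 ≤ M ∧ ∀ μ : ℝ, 0 < μ → μ ≤ 1 → ∀ ξ : Fin p → ℝ,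
      |(∏ l, ξ l ^ γ l) * pdEPow p β (fun ξ => f (dilE p τ μ ξ)) ξ| ≤ M := by
  have hg := (pow_scale p τ 1 β f hf).1
  have hc : Continuous fun η : Fin p → ℝ => (∏ l, η l ^ γ l) * pdEPow p β f η :=
    (by fun_prop : Continuous fun η : Fin p → ℝ => (∏ l, η l ^ γ l)).mul hg.1.continuous
  have hs : HasCompactSupport fun η : Fin p → ℝ => (∏ l, η l ^ γ l) * pdEPow p β f η :=
    hg.2.mul_left
  obtain ⟨M, hM⟩ := hc.bounded_above_of_compact_support hs
  refine ⟨M, (norm_nonneg _).trans (hM 0), fun μ h0 h1 ξ => ?_⟩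
  rw [(pow_scale p τ μ β f hf).2]
  obtain ⟨d, hd⟩ := Nat.exists_eq_add_of_le hγ
  have e : (∏ l, ξ l ^ γ l) * (μ ^ (∑ l, β l * τ l) * pdEPow p β f (dilE p τ μ ξ)) =
      μ ^ (1 + d) * ((∏ l, (dilE p τ μ ξ) l ^ γ l) * pdEPow p β f (dilE p τ μ ξ)) := by
    have : ∏ l, (dilE p τ μ ξ) l ^ γ l = μ ^ (∑ l, γ l * τ l) * ∏ l, ξ l ^ γ l := by
      rw [← Finset.prod_pow_eq_pow_sum, ← Finset.prod_mul_distrib]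
      refine Finset.prod_congr rfl fun l _ => ?_
      rw [dilE_apply, mul_pow, ← pow_mul, mul_comm (τ l)]
    rw [this, hd, add_assoc, pow_add]; ring
  rw [e, abs_mul, abs_of_nonneg (by positivity)]
  have := hM (dilE p τ μ ξ)
  rw [Real.norm_eq_abs] at this
  calc _ ≤ 1 * |(∏ l, (dilE p τ μ ξ) l ^ γ l) * pdEPow p β f (dilE p τ μ ξ)| := by
        gcongr; exact pow_le_one₀ h0.le h1
    _ ≤ M := by simpa using this

lemma dil_inv (p : ℕ) (τ : Fin p → ℕ) (μ : ℝ) (h : 0 < μ) (ξ : Fin p → ℝ) :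
    dilE p τ μ⁻¹ (dilE p τ μ ξ) = ξ := by
  ext l
  rw [dilE_apply, dilE_apply, inv_pow, inv_mul_cancel_left₀ (by positivity)]

lemma dil_norm (p : ℕ) (τ : Fin p → ℕ) (hτ : ∀ l, 0 < τ l) (μ : ℝ) (h : 0 < μ) (h1 : μ ≤ 1)
    (ξ : Fin p → ℝ) : ‖dilE p τ μ ξ‖ ≤ μ * ‖ξ‖ := by
  refine (pi_norm_le_iff_of_nonneg (by positivity)).2 fun l => ?_
  rw [dilE_apply, norm_mul, Real.norm_eq_abs, abs_of_nonneg (by positivity)]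
  gcongr
  · simpa using pow_le_pow_of_le_one h.le h1 (hτ l)
  · exact norm_le_pi_norm ξ l

/-- Given positive integers `τ₁,…,τ_p` (with dilations `E_λ`, homogeneous
norm `ρ_E` and `E`-weights `H_E`), there is a sequence `θ_j ∈ C_0^∞(ℝᵖ)` with `0 ≤ θ_j ≤ 1`,
whose level-one sets `Ω_j = {θ_j = 1}` are compactly contained in each other and exhaust
`ℝᵖ`, and such that for every multi-index `β ≠ 0`, every compact `K ⊆ ℝⁿ`, and every
function `r(x,ξ) = Σ_{H_E(γ) ≤ H_E(β)−1} c_γ(x) ξ^γ` with continuous coefficients, the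
quantities `|r(x,ξ) ∂_ξ^β θ_j(ξ)|` are bounded uniformly in `j`, `x ∈ K`, `ξ ∈ ℝᵖ`. -/
theorem stmt_1 (p : ℕ) (hp : 0 < p) (τ : Fin p → ℕ) (hτ : ∀ l, 0 < τ l) :
    ∃ θ : ℕ → (Fin p → ℝ) → ℝ,
      (∀ j, ContDiff ℝ (⊤ : ℕ∞) (θ j) ∧ HasCompactSupport (θ j)) ∧
      (∀ j ξ, 0 ≤ θ j ξ ∧ θ j ξ ≤ 1) ∧
      (∀ j, IsCompact (closure {ξ | θ j ξ = 1}) ∧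
        closure {ξ | θ j ξ = 1} ⊆ interior {ξ | θ (j + 1) ξ = 1}) ∧
      (⋃ j, {ξ | θ j ξ = 1}) = Set.univ ∧
      (∀ β : Fin p → ℕ, β ≠ 0 →
        ∀ (n : ℕ) (K : Set (Fin n → ℝ)), IsCompact K →
        ∀ T : Finset (Fin p → ℕ), (∀ γ ∈ T, (∑ l, γ l * τ l) + 1 ≤ ∑ l, β l * τ l) →
        ∀ c : (Fin p → ℕ) → (Fin n → ℝ) → ℝ, (∀ γ, Continuous (c γ)) →
        ∃ C : ℝ, 0 < C ∧ ∀ (j : ℕ), ∀ x ∈ K, ∀ ξ : Fin p → ℝ,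
          |(∑ γ ∈ T, c γ x * ∏ l, ξ l ^ γ l) * pdEPow p β (θ j) ξ| ≤ C) := by
  let b : ContDiffBump (0 : Fin p → ℝ) := ⟨1, 2, by norm_num, by norm_num⟩
  have hb : Good p b := ⟨b.contDiff, b.hasCompactSupport⟩
  let m : ℕ → ℝ := fun j => (1 / 3 : ℝ) ^ j
  have m0 : ∀ j, 0 < m j := fun j => by positivity
  have m1 : ∀ j, m j ≤ 1 := fun j => pow_le_one₀ (by norm_num) (by norm_num)
  have hcs : ∀ j, HasCompactSupport fun ξ => b (dilE p τ (m j) ξ) := by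
    intro j
    have hc : IsCompact (dilE p τ (m j)⁻¹ '' tsupport b) :=
      hb.2.isCompact.image (dilE p τ (m j)⁻¹).continuous
    refine HasCompactSupport.intro hc fun ξ hξ => ?_
    by_contra hne
    exact hξ ⟨dilE p τ (m j) ξ, subset_tsupport _ hne, dil_inv p τ _ (m0 j) ξ⟩
  have hcont : ∀ j, Continuous fun ξ => b (dilE p τ (m j) ξ) := fun j =>
    b.continuous.comp (dilE p τ (m j)).continuous
  have hclosed : ∀ j, IsClosed {ξ | b (dilE p τ (m j) ξ) = 1} := fun j =>
    isClosed_eq (hcont j) continuous_const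
  have hone : ∀ η : Fin p → ℝ, ‖η‖ ≤ 1 → b η = 1 := fun η h =>
    b.one_of_mem_closedBall (by simpa [b] using h)
  refine ⟨fun j ξ => b (dilE p τ (m j) ξ), fun j => ⟨b.contDiff.comp (dilE p τ (m j)).contDiff,
    hcs j⟩, fun j ξ => ⟨b.nonneg, b.le_one⟩, fun j => ?_, ?_, ?_⟩
  · rw [(hclosed j).closure_eq]
    constructor
    · refine (hcs j).isCompact.of_isClosed_subset (hclosed j) fun ξ hξ => subset_tsupport _ ?_
      have h : b (dilE p τ (m j) ξ) = 1 := hξ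
      simp [Function.mem_support, h]
    · intro ξ hξ
      have h : b (dilE p τ (m j) ξ) = 1 := hξ
      have h2 : dilE p τ (m j) ξ ∈ Function.support b := by simp [Function.mem_support, h]
      rw [b.support_eq] at h2
      have h3 : ‖dilE p τ (m j) ξ‖ < 2 := by simpa [b] using h2
      have h4 : dilE p τ (m (j+1)) ξ = dilE p τ (1/3) (dilE p τ (m j) ξ) := by
        ext l
        simp only [dilE_apply, m]
        rw [pow_succ, mul_pow]; ring
      have h5 := dil_norm p τ hτ (1/3) (by norm_num) (by norm_num) (dilE p τ (m j) ξ)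
      have ho : IsOpen {ξ | ‖dilE p τ (m (j+1)) ξ‖ < 1} :=
        isOpen_lt (dilE p τ (m (j+1))).continuous.norm continuous_const
      refine mem_interior.2 ⟨_, fun ζ hζ => hone _ (le_of_lt hζ), ho, ?_⟩
      change ‖dilE p τ (m (j+1)) ξ‖ < 1
      rw [h4]; linarith
  · refine Set.eq_univ_of_forall fun ξ => Set.mem_iUnion.2 ?_
    have ht : Filter.Tendsto (fun j => m j * ‖ξ‖) Filter.atTop (nhds (0 * ‖ξ‖)) :=
      (tendsto_pow_atTop_nhds_zero_of_lt_one (by norm_num) (by norm_num)).mul_const _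
    rw [zero_mul] at ht
    obtain ⟨j, hj⟩ := (ht.eventually (gt_mem_nhds one_pos)).exists
    exact ⟨j, hone _ ((dil_norm p τ hτ _ (m0 j) (m1 j) ξ).trans hj.le)⟩
  · intro β _ n K hK T hT c hc
    have hM : ∀ γ : Fin p → ℕ, ∃ M : ℝ, 0 ≤ M ∧ (γ ∈ T → ∀ μ : ℝ, 0 < μ → μ ≤ 1 →
        ∀ ξ : Fin p → ℝ,
        |(∏ l, ξ l ^ γ l) * pdEPow p β (fun ξ => b (dilE p τ μ ξ)) ξ| ≤ M) := by
      intro γ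
      by_cases h : γ ∈ T
      · obtain ⟨M, h0, hM⟩ := term_bound p τ β γ b hb (hT γ h)
        exact ⟨M, h0, fun _ => hM⟩
      · exact ⟨0, le_rfl, fun h' => absurd h' h⟩
    choose M hM0 hM using hM
    have hA : ∀ γ : Fin p → ℕ, ∃ A : ℝ, ∀ x ∈ K, ‖c γ x‖ ≤ A := fun γ =>
      hK.exists_bound_of_continuousOn (hc γ).continuousOn
    choose A hA using hA
    refine ⟨(∑ γ ∈ T, |A γ| * M γ) + 1,
      add_pos_of_nonneg_of_pos (Finset.sum_nonneg fun γ _ => mul_nonneg (abs_nonneg _) (hM0 γ))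
        one_pos, fun j x hx ξ => ?_⟩
    rw [Finset.sum_mul]
    refine (Finset.abs_sum_le_sum_abs _ _).trans (le_trans (Finset.sum_le_sum fun γ hγ => ?_)
      (le_add_of_nonneg_right zero_le_one))
    rw [mul_assoc, abs_mul]
    exact mul_le_mul ((hA γ x hx).trans (le_abs_self _)) (hM γ hγ _ (m0 j) (m1 j) ξ)
      (abs_nonneg _) (abs_nonneg _)


end
end

section
/- Let σ₁,…,σₙ and τ₁,…,τ_p be positive integers, with dilations δ_λ on ℝⁿ and E_λ on ℝᵖ, let 𝓔 = Σ_{l=1}^p τ_l, and let F_λ(x,y,ξ) = (δ_λ(x), δ_λ(y), E_λ(ξ)). Let 𝒱 = {(x,y,ξ) ∈ ℝⁿ×ℝⁿ×ℝᵖ : (x,ξ) ≠ (y,0)} and let g : 𝒱 → ℝ be smooth (C^∞ on the open set 𝒱) and F_λ-homogeneous of degree d ∈ ℝ with d + 𝓔 < 0, i.e. g(F_λ(x,y,ξ)) = λ^d g(x,y,ξ) for all λ > 0 and (x,y,ξ) ∈ 𝒱. Then: (i) for every pair (x,y) ∈ ℝⁿ×ℝⁿ with x ≠ y, the function ξ ↦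 g(x,y,ξ) is Lebesgue integrable on ℝᵖ; (ii) the function Φ_g(x,y) = ∫_{ℝᵖ} g(x,y,ξ) dξ is continuous on the open set {(x,y) ∈ ℝⁿ×ℝⁿ : x ≠ y}. -/
open MeasureTheory

lemma exists_scale_aux {p : ℕ} (τ : Fin p → ℕ) (hτ : ∀ l, 0 < τ l) (ξ : Fin p → ℝ) :
    ∃ lam : ℝ, 1 ≤ lam ∧ (∀ l, |ξ l| ≤ lam ^ τ l) ∧ (lam = 1 ∨ ∃ l, |ξ l| = lam ^ τ l) := by
  by_cases h : ∀ l, |ξ l| ≤ 1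
  · exact ⟨1, le_rfl, by simpa using h, Or.inl rfl⟩
  · push Not at h
    obtain ⟨l0, hl0⟩ := h
    obtain ⟨m, -, hm⟩ := Finset.exists_max_image Finset.univ
      (fun l => |ξ l| ^ ((τ l : ℝ)⁻¹)) ⟨l0, Finset.mem_univ _⟩
    have key : ∀ l, (|ξ l| ^ ((τ l : ℝ)⁻¹)) ^ τ l = |ξ l| := fun l =>
      Real.rpow_inv_natCast_pow (abs_nonneg _) (hτ l).ne'
    refine ⟨|ξ m| ^ ((τ m : ℝ)⁻¹), ?_, ?_, Or.inr ⟨m, (key m).symm⟩⟩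
    · refine le_trans ?_ (hm l0 (Finset.mem_univ _))
      exact Real.one_le_rpow hl0.le (by positivity)
    · intro l
      calc |ξ l| = (|ξ l| ^ ((τ l : ℝ)⁻¹)) ^ τ l := (key l).symm
        _ ≤ _ := by
          gcongr
          exact hm l (Finset.mem_univ _)

lemma prod_bound_aux {p : ℕ} (τ : Fin p → ℕ) (ξ : Fin p → ℝ) (a d lam : ℝ) (ha : 1 < a)
    (had : d ≤ -(a * ((∑ l, τ l : ℕ) : ℝ))) (h1 : 1 ≤ lam) (hl : ∀ l, |ξ l| ≤ lam ^ τ l) :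
    lam ^ d ≤ ((2 : ℝ) ^ a) ^ p * ∏ l, (1 + ‖ξ l‖) ^ (-a) := by
  have h0 : 0 < lam := by linarith
  calc lam ^ d ≤ lam ^ (-(a * ((∑ l, τ l : ℕ) : ℝ))) := Real.rpow_le_rpow_of_exponent_le h1 had
    _ = ∏ l, lam ^ (-(a * τ l)) := by
      rw [← Real.rpow_sum_of_pos h0]
      congr 1
      push_cast
      rw [Finset.mul_sum, Finset.sum_neg_distrib]
    _ ≤ ∏ l, ((2 : ℝ) ^ a * (1 + ‖ξ l‖) ^ (-a)) := by
      refine Finset.prod_le_prod (fun l _ => by positivity) (fun l _ => ?_)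
      have h2 : 1 + ‖ξ l‖ ≤ 2 * lam ^ τ l := by
        have := one_le_pow₀ h1 (n := τ l)
        have := hl l
        rw [Real.norm_eq_abs]
        linarith
      have h3 : (2 * lam ^ τ l) ^ (-a) ≤ (1 + ‖ξ l‖) ^ (-a) :=
        Real.rpow_le_rpow_of_nonpos (by positivity) h2 (by linarith)
      have h4 : lam ^ (-(a * τ l)) = (2 : ℝ) ^ a * (2 * lam ^ τ l) ^ (-a) := by
        rw [Real.mul_rpow (by norm_num) (by positivity), ← mul_assoc,
          ← Real.rpow_add (by norm_num : (0 : ℝ) < 2), add_neg_cancel, Real.rpow_zero, one_mul,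
          ← Real.rpow_natCast, ← Real.rpow_mul h0.le]
        congr 1
        ring
      rw [h4]
      gcongr
    _ = _ := by rw [Finset.prod_mul_distrib]; simp

/-- Let `g` be `C^∞` on `𝒱 = {(x,y,ξ) : (x,ξ) ≠ (y,0)} ⊆ ℝⁿ×ℝⁿ×ℝᵖ` and
`F_λ`-homogeneous of degree `d` with `d + 𝓔 < 0`, where `F_λ(x,y,ξ) = (δ_λ(x), δ_λ(y), E_λ(ξ))`
and `𝓔 = Σ_l τ_l`. Then (i) for every `x ≠ y` the function `ξ ↦ g(x,y,ξ)` is integrable on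
`ℝᵖ`; (ii) `Φ_g(x,y) = ∫_{ℝᵖ} g(x,y,ξ) dξ` is continuous on `{x ≠ y}`. -/
theorem stmt_4 (n p : ℕ) (σ : Fin n → ℕ) (τ : Fin p → ℕ)
    (hσ : ∀ i, 0 < σ i) (hτ : ∀ l, 0 < τ l)
    (𝓔 : ℕ) (h𝓔 : 𝓔 = ∑ l, τ l)
    (V : Set ((Fin n → ℝ) × (Fin n → ℝ) × (Fin p → ℝ)))
    (hV : V = {z | (z.1, z.2.2) ≠ (z.2.1, 0)})
    (g : (Fin n → ℝ) × (Fin n → ℝ) × (Fin p → ℝ) → ℝ)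
    (hg : ContDiffOn ℝ (⊤ : ℕ∞) g V)
    (d : ℝ) (hd : d + (𝓔 : ℝ) < 0)
    (hom : ∀ lam : ℝ, 0 < lam → ∀ z ∈ V,
      g (fun i => lam ^ (σ i) * z.1 i, fun i => lam ^ (σ i) * z.2.1 i,
         fun l => lam ^ (τ l) * z.2.2 l) = lam ^ d * g z) :
    (∀ x y : Fin n → ℝ, x ≠ y → Integrable (fun ξ => g (x, y, ξ)) volume) ∧
    ContinuousOn (fun q : (Fin n → ℝ) × (Fin n → ℝ) => ∫ ξ, g (q.1, q.2, ξ))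
      {q : (Fin n → ℝ) × (Fin n → ℝ) | q.1 ≠ q.2} := by
  subst h𝓔
  have hgc : ContinuousOn g V := hg.continuousOn
  obtain ⟨a, ha, had⟩ : ∃ a : ℝ, 1 < a ∧ d ≤ -(a * ((∑ l, τ l : ℕ) : ℝ)) := by
    rcases Nat.eq_zero_or_pos (∑ l, τ l) with h | h
    · refine ⟨2, by norm_num, ?_⟩
      rw [h] at hd ⊢
      simp at hd ⊢
      exact hd.le
    · have h' : (0 : ℝ) < ((∑ l, τ l : ℕ) : ℝ) := by exact_mod_cast h
      refine ⟨-d / ((∑ l, τ l : ℕ) : ℝ), ?_, ?_⟩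
      · rw [lt_div_iff₀ h']; linarith
      · rw [div_mul_cancel₀ _ h'.ne']; simp
  have hint : Integrable (fun ξ : Fin p → ℝ => ∏ l, (1 + ‖ξ l‖) ^ (-a)) volume := by
    refine Integrable.fintype_prod (f := fun _ (t : ℝ) => (1 + ‖t‖) ^ (-a)) (fun l => ?_)
    exact integrable_one_add_norm (by simpa using ha)
  have hopen : IsOpen {q : (Fin n → ℝ) × (Fin n → ℝ) | q.1 ≠ q.2} :=
    isOpen_ne_fun continuous_fst continuous_snd
  have hcont : ∀ q : (Fin n → ℝ) × (Fin n → ℝ), q.1 ≠ q.2 →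
      Continuous (fun ξ : Fin p → ℝ => g (q.1, q.2, ξ)) := by
    intro q hq
    refine hgc.comp_continuous (by fun_prop) (fun ξ => ?_)
    rw [hV]
    simp [hq]
  have hbound : ∀ q0 : (Fin n → ℝ) × (Fin n → ℝ), q0.1 ≠ q0.2 → ∃ C : ℝ, ∃ r > 0,
      ∀ q ∈ Metric.closedBall q0 r, ∀ ξ : Fin p → ℝ,
        ‖g (q.1, q.2, ξ)‖ ≤ C * ∏ l, (1 + ‖ξ l‖) ^ (-a) := by
    intro q0 hq0
    obtain ⟨r, hr, hrs⟩ := Metric.nhds_basis_closedBall.mem_iff.1 (hopen.mem_nhds hq0)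
    have hc1 : IsCompact (Metric.closedBall q0 r ×ˢ Metric.closedBall (0 : Fin p → ℝ) 1) :=
      (isCompact_closedBall _ _).prod (isCompact_closedBall _ _)
    have hc2 : IsCompact (Metric.closedBall (0 : (Fin n → ℝ) × (Fin n → ℝ)) (‖q0‖ + r) ×ˢ
        Metric.sphere (0 : Fin p → ℝ) 1) :=
      (isCompact_closedBall _ _).prod (isCompact_sphere _ _)
    have hG : ContinuousOn (fun w : ((Fin n → ℝ) × (Fin n → ℝ)) × (Fin p → ℝ) =>
        g (w.1.1, w.1.2, w.2)) {w | (w.1.1, w.1.2, w.2) ∈ V} :=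
      hgc.comp (by fun_prop) (fun w hw => hw)
    obtain ⟨C1, hC1⟩ := hc1.exists_bound_of_continuousOn (hG.mono (by
      rintro ⟨q, ξ⟩ ⟨h1, h2⟩
      have : q.1 ≠ q.2 := hrs h1
      simp [hV, this]))
    obtain ⟨C2, hC2⟩ := hc2.exists_bound_of_continuousOn (hG.mono (by
      rintro ⟨q, ξ⟩ ⟨h1, h2⟩
      have : ξ ≠ 0 := by
        rintro rfl
        simp at h2
      simp [hV, this]))
    set C := max 0 (max C1 C2) with hC
    have hC0 : 0 ≤ C := le_max_left _ _
    refine ⟨C * ((2 : ℝ) ^ a) ^ p, r, hr, fun q hq ξ => ?_⟩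
    obtain ⟨lam, h1, h2, h3⟩ := exists_scale_aux τ hτ ξ
    have h0 : 0 < lam := by linarith
    have hb := prod_bound_aux τ ξ a d lam ha had h1 h2
    suffices hs : ‖g (q.1, q.2, ξ)‖ ≤ C * lam ^ d by
      calc _ ≤ C * lam ^ d := hs
        _ ≤ _ := by rw [mul_assoc]; gcongr
    rcases h3 with rfl | ⟨m, hm⟩
    · rw [Real.one_rpow, mul_one]
      refine (hC1 (q, ξ) ⟨hq, ?_⟩).trans ((le_max_left _ _).trans (le_max_right _ _))
      rw [mem_closedBall_zero_iff, pi_norm_le_iff_of_nonneg zero_le_one]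
      simpa using h2
    · have hinv : ∀ (k : ℕ) (t : ℝ), lam ^ k * ((lam ^ k)⁻¹ * t) = t := fun k t => by
        field_simp
      have hinvle : ∀ k : ℕ, (lam ^ k)⁻¹ ≤ 1 := fun k => inv_le_one_of_one_le₀ (one_le_pow₀ h1)
      have hcontr : ∀ x : Fin n → ℝ, ‖(fun i => (lam ^ σ i)⁻¹ * x i)‖ ≤ ‖x‖ := by
        intro x
        rw [pi_norm_le_iff_of_nonneg (norm_nonneg _)]
        intro i
        rw [norm_mul, norm_inv, norm_pow, Real.norm_of_nonneg h0.le]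
        calc _ ≤ 1 * ‖x i‖ := by gcongr; exact hinvle _
          _ ≤ ‖x‖ := by rw [one_mul]; exact norm_le_pi_norm x i
      have hsph : ‖(fun l => (lam ^ τ l)⁻¹ * ξ l)‖ = 1 := by
        have hl : ∀ l, ‖(lam ^ τ l)⁻¹ * ξ l‖ = (lam ^ τ l)⁻¹ * |ξ l| := fun l => by
          rw [norm_mul, norm_inv, norm_pow, Real.norm_of_nonneg h0.le, Real.norm_eq_abs]
        apply le_antisymm
        · rw [pi_norm_le_iff_of_nonneg zero_le_one]
          intro l
          rw [hl, inv_mul_le_iff₀ (by positivity), mul_one]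
          exact h2 l
        · have := norm_le_pi_norm (fun l => (lam ^ τ l)⁻¹ * ξ l) m
          refine le_trans (le_of_eq ?_) this
          rw [hl, hm, inv_mul_cancel₀ (by positivity)]
      have hz : ((fun i => (lam ^ σ i)⁻¹ * q.1 i), (fun i => (lam ^ σ i)⁻¹ * q.2 i),
          (fun l => (lam ^ τ l)⁻¹ * ξ l)) ∈ V := by
        rw [hV]
        intro h
        have h' := (Prod.mk.inj h).2
        simp only at h'
        rw [h'] at hsph
        simp at hsph
      have hh := hom lam h0 _ hz
      simp only [hinv] at hh
      have hqn : ‖q‖ ≤ ‖q0‖ + r := norm_le_of_mem_closedBall hq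
      have hB := hC2 (((fun i => (lam ^ σ i)⁻¹ * q.1 i), (fun i => (lam ^ σ i)⁻¹ * q.2 i)),
          (fun l => (lam ^ τ l)⁻¹ * ξ l)) ⟨by
            rw [mem_closedBall_zero_iff]
            refine le_trans ?_ hqn
            exact max_le ((hcontr q.1).trans (norm_fst_le q)) ((hcontr q.2).trans (norm_snd_le q)),
          by rw [mem_sphere_zero_iff_norm]; exact hsph⟩
      have hB' := hB.trans ((le_max_right C1 C2).trans (le_max_right 0 _))
      change ‖g (fun i => q.1 i, fun i => q.2 i, fun l => ξ l)‖ ≤ _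
      rw [hh, norm_mul, Real.norm_of_nonneg (by positivity : 0 ≤ lam ^ d), mul_comm]
      gcongr
  refine ⟨fun x y hxy => ?_, fun q0 hq0 => ContinuousAt.continuousWithinAt ?_⟩
  · obtain ⟨C, r, hr, hC⟩ := hbound (x, y) hxy
    exact (hint.const_mul C).mono' (hcont (x, y) hxy).aestronglyMeasurable
      (Filter.Eventually.of_forall (hC (x, y) (Metric.mem_closedBall_self hr.le)))
  · obtain ⟨C, r, hr, hC⟩ := hbound q0 hq0
    refine continuousAt_of_dominated (bound := fun ξ => C * ∏ l, (1 + ‖ξ l‖) ^ (-a)) ?_ ?_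
      (hint.const_mul C) ?_
    · filter_upwards [hopen.mem_nhds hq0] with q hq
      exact (hcont q hq).aestronglyMeasurable
    · filter_upwards [Metric.closedBall_mem_nhds q0 hr] with q hq
      exact Filter.Eventually.of_forall (hC q hq)
    · refine Filter.Eventually.of_forall (fun ξ => ?_)
      have hVo : IsOpen V := by
        rw [hV]
        exact isOpen_ne_fun (by fun_prop) (by fun_prop)
      have hmem : (q0.1, q0.2, ξ) ∈ V := by
        have : q0.1 ≠ q0.2 := hq0
        simp [hV, this]
      exact ContinuousAt.comp (f := fun q : (Fin n → ℝ) × (Fin n → ℝ) => (q.1, q.2, ξ))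
        (hgc.continuousAt (hVo.mem_nhds hmem)) (by fun_prop)
end

section
/- Let σ₁,…,σₙ be positive integers with anisotropic dilations δ_λ on ℝⁿ, and let d be a nonnegative integer. If f : ℝⁿ → ℝ is smooth (C^∞) and f(δ_λ(x)) = λ^d f(x) for every λ > 0 and every x ∈ ℝⁿ, then f is a polynomial function; more precisely, there exists a real multivariate polynomial P in n variables, every monomial x^γ of which (appearing with nonzero coefficient) satisfies Σ_{i=1}^n γ_i σ_i = d, such that f(x) = P(x) for all x ∈ ℝⁿ. -/
lemma aux_tendsto (n : ℕ) (σ : Fin n → ℕ) (hσ : ∀ i, 0 < σ i)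
    (f : (Fin n → ℝ) → ℝ) (hf : Continuous f) (x : Fin n → ℝ) :
    Filter.Tendsto (fun lam : ℝ => f (fun i => lam ^ (σ i) * x i))
      (nhdsWithin 0 (Set.Ioi 0)) (nhds (f 0)) := by
  have h : Continuous (fun lam : ℝ => f (fun i => lam ^ (σ i) * x i)) := by fun_prop
  have h2 := (h.tendsto 0).mono_left (nhdsWithin_le_nhds (s := Set.Ioi 0))
  have h3 : (fun i => (0:ℝ) ^ (σ i) * x i) = 0 := by
    funext i
    simp [(hσ i).ne']
  rwa [h3] at h2

lemma aux_deriv (n : ℕ) (σ : Fin n → ℕ)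
    (f : (Fin n → ℝ) → ℝ) (hf : Differentiable ℝ f)
    (d : ℕ)
    (hom : ∀ lam : ℝ, 0 < lam → ∀ x : Fin n → ℝ,
      f (fun i => lam ^ (σ i) * x i) = lam ^ d * f x) (i : Fin n)
    (lam : ℝ) (hl : 0 < lam) (x : Fin n → ℝ) :
    lam ^ σ i * fderiv ℝ f (fun i => lam ^ (σ i) * x i) (Pi.single i 1)
      = lam ^ d * fderiv ℝ f x (Pi.single i 1) := by
  let L : (Fin n → ℝ) →L[ℝ] (Fin n → ℝ) :=
    ContinuousLinearMap.pi fun i => (lam ^ σ i) • ContinuousLinearMap.proj i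
  have hL : ∀ y, L y = fun i => lam ^ (σ i) * y i := fun y => by
    ext j; simp [L]
  have h1 : HasFDerivAt (fun y => f (L y)) ((fderiv ℝ f (L x)).comp L) x :=
    (hf (L x)).hasFDerivAt.comp x L.hasFDerivAt
  have h2 : HasFDerivAt (fun y => lam ^ d * f y) (lam ^ d • fderiv ℝ f x) x :=
    (hf x).hasFDerivAt.const_mul _
  have h3 : (fun y => f (L y)) = fun y => lam ^ d * f y := by
    funext y; rw [hL]; exact hom lam hl y
  rw [h3] at h1
  have h4 := congrArg (fun T => T (Pi.single i 1)) (h1.unique h2)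
  have h5 : L (Pi.single i 1) = lam ^ σ i • Pi.single i 1 := by
    rw [hL]; ext j
    by_cases hj : j = i
    · subst hj; simp
    · simp [hj]
  simp only [ContinuousLinearMap.comp_apply, h5, map_smul, ContinuousLinearMap.smul_apply,
    smul_eq_mul] at h4
  rwa [hL] at h4

lemma aux_euler (n : ℕ) (σ : Fin n → ℕ)
    (f : (Fin n → ℝ) → ℝ) (hf : Differentiable ℝ f)
    (d : ℕ)
    (hom : ∀ lam : ℝ, 0 < lam → ∀ x : Fin n → ℝ,
      f (fun i => lam ^ (σ i) * x i) = lam ^ d * f x) (x : Fin n → ℝ) :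
    (d : ℝ) * f x = ∑ i, (σ i : ℝ) * x i * fderiv ℝ f x (Pi.single i 1) := by
  have hc : HasDerivAt (fun lam : ℝ => (fun i => lam ^ (σ i) * x i : Fin n → ℝ))
      (fun i => (σ i : ℝ) * x i) 1 := by
    rw [hasDerivAt_pi]
    intro i
    simpa using (hasDerivAt_pow (σ i) (1:ℝ)).mul_const (x i)
  have h0 : HasFDerivAt f (fderiv ℝ f x) (fun i => (1:ℝ) ^ (σ i) * x i) := by
    simpa using (hf x).hasFDerivAt
  have h1 := h0.comp_hasDerivAt (1:ℝ) hc
  have h2 : HasDerivAt (fun lam : ℝ => lam ^ d * f x) ((d:ℝ) * f x) 1 := by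
    simpa using (hasDerivAt_pow d (1:ℝ)).mul_const (f x)
  have h3 := h2.congr_of_eventuallyEq (f₁ := f ∘ fun lam : ℝ => (fun i => lam ^ (σ i) * x i)) (by
    filter_upwards [lt_mem_nhds (zero_lt_one (α := ℝ))] with lam hl
    exact hom lam hl x)
  rw [h3.unique h1]
  conv_lhs => rw [pi_eq_sum_univ' (fun i => (σ i : ℝ) * x i)]
  rw [map_sum]
  refine Finset.sum_congr rfl fun i _ => ?_
  rw [map_smul, smul_eq_mul]

lemma aux_main (n : ℕ) (σ : Fin n → ℕ) (hσ : ∀ i, 0 < σ i) (d : ℕ) :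
    ∀ (f : (Fin n → ℝ) → ℝ) (_ : ContDiff ℝ (⊤ : ℕ∞) f)
    (_ : ∀ lam : ℝ, 0 < lam → ∀ x : Fin n → ℝ,
      f (fun i => lam ^ (σ i) * x i) = lam ^ d * f x),
    ∃ P : MvPolynomial (Fin n) ℝ,
      MvPolynomial.IsWeightedHomogeneous σ P d ∧
      ∀ x, f x = MvPolynomial.eval x P := by
  induction d using Nat.strong_induction_on with
  | _ d ih =>
  intro f hf hom
  have hd : Differentiable ℝ f := hf.differentiable (by simp)
  rcases Nat.eq_zero_or_pos d with rfl | hpos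
  · refine ⟨MvPolynomial.C (f 0), MvPolynomial.isWeightedHomogeneous_C _ _, fun x => ?_⟩
    rw [MvPolynomial.eval_C]
    refine tendsto_nhds_unique ?_ (aux_tendsto n σ hσ f hf.continuous x)
    refine tendsto_const_nhds.congr' ?_
    filter_upwards [self_mem_nhdsWithin] with lam hl
    rw [hom lam hl x]; simp
  have key : ∀ i, ∃ Q : MvPolynomial (Fin n) ℝ,
      MvPolynomial.IsWeightedHomogeneous σ (MvPolynomial.X i * Q) d ∧
      ∀ x, fderiv ℝ f x (Pi.single i 1) = MvPolynomial.eval x Q := by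
    intro i
    have hg : ContDiff ℝ (⊤ : ℕ∞) (fun x => fderiv ℝ f x (Pi.single i 1)) :=
      (hf.fderiv_right (by simp)).clm_apply contDiff_const
    have hdv := aux_deriv n σ f hd d hom i
    rcases le_or_gt (σ i) d with hle | hlt
    · obtain ⟨Q, hQ, hQ'⟩ := ih (d - σ i) (by have := hσ i; omega) _ hg (by
        intro lam hl x
        have h := hdv lam hl x
        have hp : lam ^ σ i ≠ 0 := (pow_pos hl _).ne'
        apply mul_left_cancel₀ hp
        rw [h, ← mul_assoc, ← pow_add]
        congr 2; omega)
      refine ⟨Q, ?_, hQ'⟩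
      have := (MvPolynomial.isWeightedHomogeneous_X ℝ σ i).mul hQ
      rwa [Nat.add_sub_cancel' hle] at this
    · refine ⟨0, by simpa using MvPolynomial.isWeightedHomogeneous_zero ℝ σ d, fun x => ?_⟩
      rw [map_zero]
      have h1 := aux_tendsto n σ hσ _ hg.continuous x
      have h2 : Filter.Tendsto (fun lam : ℝ => lam ^ (σ i - d))
          (nhdsWithin 0 (Set.Ioi 0)) (nhds 0) := by
        have := ((continuous_pow (M := ℝ) (σ i - d)).tendsto 0).mono_left
          (nhdsWithin_le_nhds (s := Set.Ioi 0))
        rwa [zero_pow (by omega)] at this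
      have h3 := h2.mul h1
      rw [zero_mul] at h3
      refine tendsto_nhds_unique ?_ h3
      refine tendsto_const_nhds.congr' ?_
      filter_upwards [self_mem_nhdsWithin] with lam hl
      have hp : lam ^ d ≠ 0 := (pow_pos hl _).ne'
      apply mul_left_cancel₀ hp
      rw [← hdv lam hl x, ← mul_assoc, ← pow_add]
      congr 2; omega
  choose Q hQ hQ' using key
  refine ⟨MvPolynomial.C ((d:ℝ)⁻¹) * ∑ i, MvPolynomial.C (σ i : ℝ) * (MvPolynomial.X i * Q i),
    ?_, fun x => ?_⟩
  · have hs := MvPolynomial.IsWeightedHomogeneous.sum (w := σ) Finset.univ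
      (fun i => MvPolynomial.C (σ i : ℝ) * (MvPolynomial.X i * Q i)) d (fun i _ => by
        simpa using (MvPolynomial.isWeightedHomogeneous_C σ (σ i : ℝ)).mul (hQ i))
    simpa using (MvPolynomial.isWeightedHomogeneous_C σ ((d:ℝ)⁻¹)).mul hs
  · have he := aux_euler n σ f hd d hom x
    have hd0 : (d:ℝ) ≠ 0 := by positivity
    apply mul_left_cancel₀ hd0
    rw [he]
    simp only [map_mul, map_sum, MvPolynomial.eval_C, MvPolynomial.eval_X, ← hQ']
    rw [mul_inv_cancel_left₀ hd0]
    exact Finset.sum_congr rfl fun i _ => by ring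



/-- A smooth function `f : ℝⁿ → ℝ` that is `δ_λ`-homogeneous of
nonnegative integer degree `d` is a polynomial function; more precisely it is the
evaluation of a real polynomial all of whose monomials `x^γ` have `δ`-weight
`Σ_i γ_i σ_i = d`. -/
theorem stmt_10 (n : ℕ) (σ : Fin n → ℕ) (hσ : ∀ i, 0 < σ i)
    (f : (Fin n → ℝ) → ℝ) (hf : ContDiff ℝ (⊤ : ℕ∞) f)
    (d : ℕ)
    (hom : ∀ lam : ℝ, 0 < lam → ∀ x : Fin n → ℝ,
      f (fun i => lam ^ (σ i) * x i) = lam ^ d * f x) :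
    ∃ P : MvPolynomial (Fin n) ℝ,
      (∀ γ ∈ P.support, ∑ i, γ i * σ i = d) ∧
      ∀ x, f x = MvPolynomial.eval x P := by
  obtain ⟨P, hP, hP'⟩ := aux_main n σ hσ d f hf hom
  refine ⟨P, fun γ hγ => ?_, hP'⟩
  have := hP (MvPolynomial.mem_support_iff.mp hγ)
  rw [← this, Finsupp.weight_apply, Finsupp.sum_fintype _ _ (by simp)]
  simp
end

section
/- Let σ₁,…,σₙ be positive integers with anisotropic dilations δ_λ on ℝⁿ, and let e be a real number. If f : ℝⁿ → ℝ is smooth and f(δ_λ(x)) = λ^e f(x) for every λ > 0 and every x ∈ ℝⁿ, then for every index k ∈ {1,…,n} with σ_k > e, the partial derivative ∂f/∂x_k vanishes identically; that is, f does not depend on the variable x_k. -/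
/-- Let `f : ℝⁿ → ℝ` be smooth and `δ_λ`-homogeneous of real degree `e`
(w.r.t. anisotropic dilations `δ_λ(x)_i = λ^(σ_i) x_i`, `σ_i` positive integers). Then for
every index `k` with `σ_k > e`, the partial derivative `∂f/∂x_k` vanishes identically. -/
theorem stmt_12 (n : ℕ) (σ : Fin n → ℕ) (hσ : ∀ i, 0 < σ i)
    (f : (Fin n → ℝ) → ℝ) (hf : ContDiff ℝ (⊤ : ℕ∞) f)
    (e : ℝ)
    (hom : ∀ lam : ℝ, 0 < lam → ∀ x : Fin n → ℝ,
      f (fun i => lam ^ (σ i) * x i) = lam ^ e * f x)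
    (k : Fin n) (hk : e < (σ k : ℝ)) :
    ∀ x, fderiv ℝ f x (Pi.single k 1) = 0 := by
  intro x
  have hd : Differentiable ℝ f := hf.differentiable (by simp)
  have key : ∀ lam : ℝ, 0 < lam →
      fderiv ℝ f x (Pi.single k 1) =
        lam ^ ((σ k : ℝ) - e) * fderiv ℝ f (fun i => lam ^ (σ i) * x i) (Pi.single k 1) := by
    intro lam hl
    let L : (Fin n → ℝ) →L[ℝ] (Fin n → ℝ) :=
      ContinuousLinearMap.pi fun i => (lam ^ (σ i)) • ContinuousLinearMap.proj i
    have hL : ∀ y, L y = fun i => lam ^ (σ i) * y i := by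
      intro y; ext i; simp [L]
    have h1 : HasFDerivAt (fun y => f (L y)) ((fderiv ℝ f (L x)).comp L) x :=
      (hd (L x)).hasFDerivAt.comp x L.hasFDerivAt
    have h2 : HasFDerivAt (fun y => f (L y)) (lam ^ e • fderiv ℝ f x) x := by
      have h3 : (fun y => f (L y)) = fun y => lam ^ e * f y := by
        ext y; rw [hL]; exact hom lam hl y
      rw [h3]
      exact (hd x).hasFDerivAt.const_mul (lam ^ e)
    have h4 := congrArg (fun T => T (Pi.single k (1 : ℝ))) (h1.unique h2)
    have h5 : L (Pi.single k 1) = lam ^ (σ k) • (Pi.single k (1 : ℝ) : Fin n → ℝ) := by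
      rw [hL]; ext i
      by_cases h : i = k
      · subst h; simp
      · simp [h]
    simp only [ContinuousLinearMap.comp_apply, h5, map_smul, smul_eq_mul,
      ContinuousLinearMap.smul_apply, hL] at h4
    have hp : (0 : ℝ) < lam ^ e := Real.rpow_pos_of_pos hl e
    rw [Real.rpow_sub hl, Real.rpow_natCast, div_mul_eq_mul_div, h4]
    field_simp
  have hc : Continuous fun lam : ℝ =>
      lam ^ ((σ k : ℝ) - e) * fderiv ℝ f (fun i => lam ^ (σ i) * x i) (Pi.single k 1) := by
    have h1 : Continuous (fderiv ℝ f) := hf.continuous_fderiv (by simp)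
    have h2 : Continuous fun lam : ℝ => lam ^ ((σ k : ℝ) - e) :=
      Real.continuous_rpow_const (by linarith)
    have h3 : Continuous fun lam : ℝ => (fun i => lam ^ (σ i) * x i) := by fun_prop
    exact h2.mul ((h1.comp h3).clm_apply continuous_const)
  have t1 := (hc.tendsto 0).mono_left (nhdsWithin_le_nhds (s := Set.Ioi 0))
  rw [Real.zero_rpow (by linarith), zero_mul] at t1
  refine tendsto_nhds_unique (tendsto_const_nhds.congr' ?_) t1
  filter_upwards [self_mem_nhdsWithin] with lam hl using key lam hl
end
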